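/- Let μ < 0 and α ∈ (0, 1). For every ε > 0 with ε^{1−α}/(1−α) < −μ there exists a unique u_ε ∈ ℝ satisfying μ + ∫₀^ε e^{u_ε x} x^{−α} dx = 0, and this u_ε is strictly positive. Moreover, there exist constants 0 < c ≤ C and ε₀ ∈ (0, 1) such that for all 0 < ε ≤ ε₀: c |log ε| ≤ ε u_ε ≤ C |log ε|, and c ε^{−1} |log ε| ≤ −(u_ε μ + ∫₀^ε (e^{u_ε x} − 1) x^{−1−α} dx) ≤ C ε^{−1} |log ε|. -/

import Mathlib

open MeasureTheory Real Set

/-!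
Write `F(u) = ∫₀^ε e^{ux} x^{-α} dx`, so that `Λ' = μ + F`, and let `m = -μ` and `a = 1 - α`.
The function `F` increases strictly from `F(0) = ε^a / a` to `∞`, which gives the unique `u > 0`
with `F(u) = m`. Bounding `e^{ux}` above by `e^{uε}` on `(0, ε]`, and below by `e^{θuε}` on
`(θε, ε]`, and taking logarithms in `F(u) = m` gives
`a |log ε| + O(1) ≤ ε u ≤ θ⁻¹ (a |log ε| + O(1))` for every `θ < 1`, hence `ε u ∼ a |log ε|`.

Since `Λ'` is convex, with `Λ(0) = 0` and `Λ'(u) = 0`, the trapezoidal rule yields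
`Λ(u) ≤ u Λ'(0) / 2`. Together with `Λ(u) ≥ u μ` this traps `-Λ(u)` between
`u (m - F(0)) / 2` and `u m`.
-/

open Filter
open scoped Topology

/-- The mass of the measure `w dν` on `(0, ε]` after exponential tilting by `e^{ux}`. If a Lévy
process has Lévy measure `x⁻¹ w(x) ν(dx)` on `(0, ∞)`, this is the mean contribution of its jumps
of size at most `ε` under the Esscher transform with parameter `u`. -/
noncomputable def tiltedMass (ν : Measure ℝ) (w : ℝ → ℝ) (ε u : ℝ) : ℝ :=
  ∫ x in Ioc 0 ε, exp (u * x) * w x ∂ν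

/-- The logarithmic moment generating function `Λ_ε` at time one of a Lévy process of bounded
variation with drift `μ` and Lévy measure `p dν` on `(0, ∞)`, after removal of the jumps larger
than `ε`. -/
noncomputable def truncatedLogMGF (ν : Measure ℝ) (p : ℝ → ℝ) (μ ε u : ℝ) : ℝ :=
  u * μ + ∫ x in Ioc 0 ε, (exp (u * x) - 1) * p x ∂ν

lemma setIntegral_mul_pos {X : Type*} [MeasurableSpace X] {ν : Measure X} {s : Set X}
    {g w : X → ℝ} (hs : MeasurableSet s) (hg : ∀ x ∈ s, 0 < g x) (hw₀ : ∀ x ∈ s, 0 ≤ w x)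
    (hgw : IntegrableOn (fun x => g x * w x) s ν) (hmass : 0 < ∫ x in s, w x ∂ν) :
    0 < ∫ x in s, g x * w x ∂ν := by
  have hw : IntegrableOn w s ν := .of_integral_ne_zero hmass.ne'
  have hsupp : (Function.support fun x => g x * w x) ∩ s = Function.support w ∩ s := by
    ext x
    simp only [mem_inter_iff, Function.mem_support, mul_ne_zero_iff, and_congr_left_iff,
      and_iff_right_iff_imp]
    exact fun hx _ => (hg x hx).ne'
  rw [setIntegral_pos_iff_support_of_nonneg_ae _ hgw, hsupp]
  · exact (setIntegral_pos_iff_support_of_nonneg_ae (ae_restrict_of_forall_mem hs hw₀) hw).1 hmass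
  · exact ae_restrict_of_forall_mem hs fun x hx => mul_nonneg (hg x hx).le (hw₀ x hx)

section TiltedMass

variable {ν : Measure ℝ} {w : ℝ → ℝ} {ε : ℝ}

lemma tiltedMass_zero : tiltedMass ν w ε 0 = ∫ x in Ioc 0 ε, w x ∂ν := by
  simp [tiltedMass]

lemma integrableOn_exp_mul (hw : IntegrableOn w (Ioc 0 ε) ν) (u : ℝ) :
    IntegrableOn (fun x => exp (u * x) * w x) (Ioc 0 ε) ν :=
  hw.continuousOn_mul_of_subset (by fun_prop) isCompact_Icc measurableSet_Ioc Ioc_subset_Icc_self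

lemma strictMono_tiltedMass (hw₀ : ∀ x ∈ Ioc 0 ε, 0 ≤ w x)
    (hmass : 0 < ∫ x in Ioc 0 ε, w x ∂ν) : StrictMono (tiltedMass ν w ε) := by
  intro u v huv
  have hw : IntegrableOn w (Ioc 0 ε) ν := .of_integral_ne_zero hmass.ne'
  have hsub := (integrableOn_exp_mul hw v).sub (integrableOn_exp_mul hw u)
  rw [← sub_pos, tiltedMass, tiltedMass,
    ← integral_sub (integrableOn_exp_mul hw v) (integrableOn_exp_mul hw u)]
  simp only [Pi.sub_def, ← sub_mul] at hsub ⊢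
  refine setIntegral_mul_pos measurableSet_Ioc (fun x hx => ?_) hw₀ hsub hmass
  exact sub_pos.2 (exp_lt_exp.2 (mul_lt_mul_of_pos_right huv hx.1))

lemma continuous_tiltedMass (hw : IntegrableOn w (Ioc 0 ε) ν) :
    Continuous (tiltedMass ν w ε) := by
  refine continuous_iff_continuousAt.2 fun u₀ => ?_
  refine continuousAt_of_dominated (bound := fun x => exp ((u₀ + 1) * x) * ‖w x‖)
    (.of_forall fun u => (integrableOn_exp_mul hw u).aestronglyMeasurable) ?_
    (integrableOn_exp_mul hw.norm _) (.of_forall fun x => by fun_prop)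
  filter_upwards [Iic_mem_nhds (lt_add_one u₀)] with u hu
  refine ae_restrict_of_forall_mem measurableSet_Ioc fun x hx => ?_
  rw [norm_mul, norm_of_nonneg (exp_pos _).le]
  gcongr
  exacts [hx.1.le, hu]

lemma tiltedMass_le (hw : IntegrableOn w (Ioc 0 ε) ν) (hw₀ : ∀ x ∈ Ioc 0 ε, 0 ≤ w x)
    {u : ℝ} (hu : 0 ≤ u) :
    tiltedMass ν w ε u ≤ exp (u * ε) * ∫ x in Ioc 0 ε, w x ∂ν := by
  rw [← integral_const_mul]
  refine setIntegral_mono_on (integrableOn_exp_mul hw u) (hw.const_mul _) measurableSet_Ioc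
    fun x hx => ?_
  have := hw₀ x hx
  gcongr
  exact hx.2

lemma exp_mul_setIntegral_le_tiltedMass (hw : IntegrableOn w (Ioc 0 ε) ν)
    (hw₀ : ∀ x ∈ Ioc 0 ε, 0 ≤ w x) {δ u : ℝ} (hδ : 0 ≤ δ) (hu : 0 ≤ u) :
    exp (u * δ) * ∫ x in Ioc δ ε, w x ∂ν ≤ tiltedMass ν w ε u := by
  have hsub : Ioc δ ε ⊆ Ioc 0 ε := Ioc_subset_Ioc_left hδ
  have hint := integrableOn_exp_mul hw u
  calc exp (u * δ) * ∫ x in Ioc δ ε, w x ∂ν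
      = ∫ x in Ioc δ ε, exp (u * δ) * w x ∂ν := (integral_const_mul _ _).symm
    _ ≤ ∫ x in Ioc δ ε, exp (u * x) * w x ∂ν := by
        refine setIntegral_mono_on ((hw.mono_set hsub).const_mul _) (hint.mono_set hsub)
          measurableSet_Ioc fun x hx => ?_
        have := hw₀ x (hsub hx)
        gcongr
        exact hx.1.le
    _ ≤ tiltedMass ν w ε u :=
        setIntegral_mono_set hint (ae_restrict_of_forall_mem measurableSet_Ioc fun x hx =>
          mul_nonneg (exp_pos _).le (hw₀ x hx)) hsub.eventuallyLE

lemma tendsto_tiltedMass_atTop (hw₀ : ∀ x ∈ Ioc 0 ε, 0 ≤ w x)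
    (hmass : 0 < ∫ x in Ioc 0 ε, w x ∂ν) : Tendsto (tiltedMass ν w ε) atTop atTop := by
  have hw : IntegrableOn w (Ioc 0 ε) ν := .of_integral_ne_zero hmass.ne'
  have hxw : IntegrableOn (fun x => x * w x) (Ioc 0 ε) ν :=
    hw.continuousOn_mul_of_subset continuousOn_id isCompact_Icc measurableSet_Ioc
      Ioc_subset_Icc_self
  have hpos := setIntegral_mul_pos measurableSet_Ioc (fun x hx => hx.1) hw₀ hxw hmass
  refine tendsto_atTop_mono (fun u => ?_) (tendsto_id.atTop_mul_const hpos)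
  rw [id, ← integral_const_mul]
  refine setIntegral_mono_on (hxw.const_mul u) (integrableOn_exp_mul hw u) measurableSet_Ioc
    fun x hx => ?_
  rw [← mul_assoc]
  exact mul_le_mul_of_nonneg_right (by linarith [add_one_le_exp (u * x)]) (hw₀ x hx)

lemma existsUnique_tiltedMass_eq (hw₀ : ∀ x ∈ Ioc 0 ε, 0 ≤ w x)
    (hmass : 0 < ∫ x in Ioc 0 ε, w x ∂ν) {m : ℝ} (hm : ∫ x in Ioc 0 ε, w x ∂ν ≤ m) :
    ∃! u, tiltedMass ν w ε u = m := by
  have hcont := continuous_tiltedMass (.of_integral_ne_zero hmass.ne')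
  obtain ⟨u, hu⟩ := mem_range_of_exists_le_of_exists_ge hcont ⟨0, tiltedMass_zero.trans_le hm⟩
    ((tendsto_tiltedMass_atTop hw₀ hmass).eventually_ge_atTop m).exists
  exact ⟨u, hu, fun v hv => (strictMono_tiltedMass hw₀ hmass).injective (hv.trans hu.symm)⟩

lemma setIntegral_lt_tiltedMass_iff (hw₀ : ∀ x ∈ Ioc 0 ε, 0 ≤ w x)
    (hmass : 0 < ∫ x in Ioc 0 ε, w x ∂ν) {u : ℝ} :
    ∫ x in Ioc 0 ε, w x ∂ν < tiltedMass ν w ε u ↔ 0 < u := by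
  rw [← tiltedMass_zero, (strictMono_tiltedMass hw₀ hmass).lt_iff_lt]

end TiltedMass

section TruncatedLogMGF

lemma exp_sub_one_le_half_mul_exp_add_one {t : ℝ} (ht : 0 ≤ t) :
    exp t - 1 ≤ t / 2 * (exp t + 1) := by
  let gap : ℝ → ℝ := fun s => s / 2 * (exp s + 1) - (exp s - 1)
  have hderiv (s : ℝ) : HasDerivAt gap ((1 - (1 - s) * exp s) / 2) s := by
    convert! (((hasDerivAt_id s).div_const 2).mul ((hasDerivAt_exp s).add_const 1)).sub
      ((hasDerivAt_exp s).sub_const 1) using 1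
    simp only [id]
    ring
  have hmono : Monotone gap := monotone_of_hasDerivAt_nonneg hderiv fun s => by
    have : (1 - s) * exp s ≤ exp (-s) * exp s := by gcongr; exact one_sub_le_exp_neg s
    rw [← exp_add, neg_add_cancel, exp_zero] at this
    simp only [Pi.zero_apply]
    linarith
  have := hmono ht
  simp only [gap, exp_zero] at this
  linarith

variable {ν : Measure ℝ} {p w : ℝ → ℝ} {μ ε u : ℝ}

lemma mul_le_truncatedLogMGF (hp₀ : ∀ x ∈ Ioc 0 ε, 0 ≤ p x) (hu : 0 ≤ u) :
    u * μ ≤ truncatedLogMGF ν p μ ε u := by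
  refine le_add_of_nonneg_right (setIntegral_nonneg measurableSet_Ioc fun x hx => ?_)
  exact mul_nonneg (sub_nonneg.2 (one_le_exp (mul_nonneg hu hx.1.le))) (hp₀ x hx)

lemma setIntegral_exp_sub_one_mul_le (hp₀ : ∀ x ∈ Ioc 0 ε, 0 ≤ p x)
    (hpw : ∀ x ∈ Ioc 0 ε, x * p x = w x) (hw : IntegrableOn w (Ioc 0 ε) ν) (hu : 0 ≤ u) :
    ∫ x in Ioc 0 ε, (exp (u * x) - 1) * p x ∂ν ≤
      u / 2 * (tiltedMass ν w ε u + tiltedMass ν w ε 0) := by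
  have hint := ((integrableOn_exp_mul hw u).add hw).const_mul (u / 2)
  rw [tiltedMass_zero, tiltedMass, ← integral_add (integrableOn_exp_mul hw u) hw,
    ← integral_const_mul]
  refine integral_mono_of_nonneg (ae_restrict_of_forall_mem measurableSet_Ioc fun x hx => ?_) hint
    (ae_restrict_of_forall_mem measurableSet_Ioc fun x hx => ?_)
  · exact mul_nonneg (sub_nonneg.2 (one_le_exp (mul_nonneg hu hx.1.le))) (hp₀ x hx)
  · calc (exp (u * x) - 1) * p x
        ≤ u * x / 2 * (exp (u * x) + 1) * p x := mul_le_mul_of_nonneg_right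
          (exp_sub_one_le_half_mul_exp_add_one (mul_nonneg hu hx.1.le)) (hp₀ x hx)
      _ = u / 2 * (exp (u * x) * w x + w x) := by rw [← hpw x hx]; ring

lemma truncatedLogMGF_le (hp₀ : ∀ x ∈ Ioc 0 ε, 0 ≤ p x)
    (hpw : ∀ x ∈ Ioc 0 ε, x * p x = w x) (hw : IntegrableOn w (Ioc 0 ε) ν) (hu : 0 ≤ u) :
    truncatedLogMGF ν p μ ε u ≤
      u / 2 * ((μ + tiltedMass ν w ε 0) + (μ + tiltedMass ν w ε u)) := by
  rw [truncatedLogMGF]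
  linarith [setIntegral_exp_sub_one_mul_le hp₀ hpw hw hu]

end TruncatedLogMGF

section Stable

variable {α ε : ℝ}

lemma integrableOn_Ioc_rpow_neg (hα : α < 1) (hε : 0 ≤ ε) :
    IntegrableOn (fun x : ℝ => x ^ (-α)) (Ioc 0 ε) :=
  (intervalIntegrable_iff_integrableOn_Ioc_of_le hε).1
    (intervalIntegral.intervalIntegrable_rpow' (by linarith))

lemma rpow_nonneg_of_mem_Ioc_zero (s : ℝ) : ∀ x ∈ Ioc 0 ε, 0 ≤ x ^ s :=
  fun _ hx => rpow_nonneg hx.1.le s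

lemma setIntegral_Ioc_rpow_neg (hα : α < 1) {δ : ℝ} (hδ : δ ≤ ε) :
    ∫ x in Ioc δ ε, x ^ (-α) = (ε ^ (1 - α) - δ ^ (1 - α)) / (1 - α) := by
  rw [← intervalIntegral.integral_of_le hδ, integral_rpow (Or.inl (by linarith)),
    neg_add_eq_sub]

lemma setIntegral_Ioc_zero_rpow_neg (hα : α < 1) (hε : 0 ≤ ε) :
    ∫ x in Ioc 0 ε, x ^ (-α) = ε ^ (1 - α) / (1 - α) := by
  rw [setIntegral_Ioc_rpow_neg hα hε, zero_rpow (by linarith), sub_zero]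

lemma setIntegral_Ioc_zero_rpow_neg_pos (hα : α < 1) (hε : 0 < ε) :
    0 < ∫ x in Ioc 0 ε, x ^ (-α) := by
  rw [setIntegral_Ioc_zero_rpow_neg hα hε.le]
  exact div_pos (rpow_pos_of_pos hε _) (sub_pos.2 hα)

lemma log_sub_mul_log_le_of_le_tiltedMass (hα : α < 1) (hε : 0 < ε) {m u : ℝ} (hm : 0 < m)
    (hu : 0 ≤ u) (h : m ≤ tiltedMass volume (fun x => x ^ (-α)) ε u) :
    log ((1 - α) * m) - (1 - α) * log ε ≤ ε * u := by
  have hα' : 0 < 1 - α := sub_pos.2 hα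
  have hle : (1 - α) * m ≤ exp (u * ε) * ε ^ (1 - α) := by
    have := h.trans (tiltedMass_le (integrableOn_Ioc_rpow_neg hα hε.le)
      (rpow_nonneg_of_mem_Ioc_zero _) hu)
    rwa [setIntegral_Ioc_zero_rpow_neg hα hε.le, ← mul_div_assoc, le_div_iff₀' hα'] at this
  have := log_le_log (by positivity) hle
  rw [log_mul (exp_pos _).ne' (rpow_pos_of_pos hε _).ne', log_exp, log_rpow hε] at this
  linarith

lemma mul_le_log_sub_mul_log_of_tiltedMass_le (hα : α < 1) (hε : 0 < ε) {θ m u : ℝ}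
    (hθ : θ ∈ Ico (0 : ℝ) 1) (hu : 0 ≤ u)
    (h : tiltedMass volume (fun x => x ^ (-α)) ε u ≤ m) :
    θ * (ε * u) ≤ log ((1 - α) * m / (1 - θ ^ (1 - α))) - (1 - α) * log ε := by
  have hα' : 0 < 1 - α := sub_pos.2 hα
  have hθ' : 0 < 1 - θ ^ (1 - α) := sub_pos.2 (rpow_lt_one hθ.1 hθ.2 hα')
  have hle : exp (u * (θ * ε)) * ε ^ (1 - α) ≤ (1 - α) * m / (1 - θ ^ (1 - α)) := by
    have := (exp_mul_setIntegral_le_tiltedMass (integrableOn_Ioc_rpow_neg hα hε.le)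
      (rpow_nonneg_of_mem_Ioc_zero _) (mul_nonneg hθ.1 hε.le) hu).trans h
    rw [setIntegral_Ioc_rpow_neg hα (mul_le_of_le_one_left hε.le hθ.2.le),
      mul_rpow hθ.1 hε.le, ← mul_div_assoc, div_le_iff₀' hα'] at this
    rw [le_div_iff₀ hθ']
    linarith
  have := log_le_log (by positivity) hle
  rw [log_mul (exp_pos _).ne' (rpow_pos_of_pos hε _).ne', log_exp, log_rpow hε] at this
  linarith

lemma eventually_mul_abs_log_le_of_le_tiltedMass (hα : α < 1) {m c : ℝ} (hm : 0 < m)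
    (hc : c < 1 - α) :
    ∀ᶠ ε in 𝓝[>] (0 : ℝ), ∀ u, 0 ≤ u → m ≤ tiltedMass volume (fun x => x ^ (-α)) ε u →
      c * |log ε| ≤ ε * u := by
  have hlog := tendsto_log_nhdsGT_zero.eventually_le_atBot (log ((1 - α) * m) / (1 - α - c))
  filter_upwards [self_mem_nhdsWithin, Ioo_mem_nhdsGT one_pos, hlog] with ε hε hε₁ hlog u hu h
  rw [abs_of_neg (log_neg hε hε₁.2)]
  rw [le_div_iff₀ (sub_pos.2 hc)] at hlog
  linarith [log_sub_mul_log_le_of_le_tiltedMass hα hε hm hu h]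

lemma eventually_mul_le_mul_abs_log_of_tiltedMass_le (hα : α < 1) (m : ℝ) {C : ℝ}
    (hC : 1 - α < C) :
    ∀ᶠ ε in 𝓝[>] (0 : ℝ), ∀ u, 0 ≤ u → tiltedMass volume (fun x => x ^ (-α)) ε u ≤ m →
      ε * u ≤ C * |log ε| := by
  have hα' : 0 < 1 - α := sub_pos.2 hα
  have hC₀ : 0 < C := hα'.trans hC
  obtain ⟨θ, hθC, hθ₁⟩ := exists_between ((div_lt_one hC₀).2 hC)
  have hθ₀ : 0 < θ := (div_pos hα' hC₀).trans hθC
  have hgap : 0 < θ * C - (1 - α) := sub_pos.2 ((div_lt_iff₀ hC₀).1 hθC)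
  have hlog := tendsto_log_nhdsGT_zero.eventually_le_atBot
    (-log ((1 - α) * m / (1 - θ ^ (1 - α))) / (θ * C - (1 - α)))
  filter_upwards [self_mem_nhdsWithin, Ioo_mem_nhdsGT one_pos, hlog] with ε hε hε₁ hlog u hu h
  rw [abs_of_neg (log_neg hε hε₁.2)]
  rw [le_div_iff₀ hgap] at hlog
  refine le_of_mul_le_mul_left ?_ hθ₀
  linarith [mul_le_log_sub_mul_log_of_tiltedMass_le hα hε ⟨hθ₀.le, hθ₁⟩ hu h]

lemma pos_of_tiltedMass_rpow_neg_eq (hα : α < 1) (hε : 0 < ε) {m u : ℝ}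
    (hm : ε ^ (1 - α) / (1 - α) < m) (hu : tiltedMass volume (fun x => x ^ (-α)) ε u = m) :
    0 < u := by
  rw [← setIntegral_Ioc_zero_rpow_neg hα hε.le, ← hu] at hm
  exact (setIntegral_lt_tiltedMass_iff (rpow_nonneg_of_mem_Ioc_zero _)
    (setIntegral_Ioc_zero_rpow_neg_pos hα hε)).1 hm

lemma eventually_rpow_div_lt {a b : ℝ} (ha : 0 < a) (hb : 0 < b) :
    ∀ᶠ ε in 𝓝[>] (0 : ℝ), ε ^ a / a < b := by
  have hlim : Tendsto (fun ε : ℝ => ε ^ a / a) (𝓝[>] 0) (𝓝 (0 ^ a / a)) :=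
    ((continuousAt_rpow_const 0 a (Or.inr ha.le)).tendsto.mono_left nhdsWithin_le_nhds).div_const a
  rw [zero_rpow ha.ne', zero_div] at hlim
  exact hlim.eventually_lt_const hb

lemma eventually_esscher_parameter_bounds (hα : α < 1) {m c C : ℝ} (hm : 0 < m)
    (hc : c < 1 - α) (hC : 1 - α < C) :
    ∀ᶠ ε in 𝓝[>] (0 : ℝ), ∀ u, tiltedMass volume (fun x => x ^ (-α)) ε u = m →
      0 < u ∧ c * |log ε| ≤ ε * u ∧ ε * u ≤ C * |log ε| := by
  filter_upwards [self_mem_nhdsWithin, eventually_rpow_div_lt (sub_pos.2 hα) hm,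
    eventually_mul_abs_log_le_of_le_tiltedMass hα hm hc,
    eventually_mul_le_mul_abs_log_of_tiltedMass_le hα m hC] with ε hε hmass hlower hupper u hu
  have hpos := pos_of_tiltedMass_rpow_neg_eq hα hε hmass hu
  exact ⟨hpos, hlower u hpos.le hu.ge, hupper u hpos.le hu.le⟩

lemma neg_truncatedLogMGF_rpow_neg_bounds (hα : α < 1) (hε : 0 < ε) {μ u : ℝ}
    (hmass : ε ^ (1 - α) / (1 - α) ≤ -μ / 2) (hu₀ : 0 ≤ u)
    (hu : tiltedMass volume (fun x => x ^ (-α)) ε u = -μ) :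
    -μ / 4 * u ≤ -truncatedLogMGF volume (fun x => x ^ (-(1 + α))) μ ε u ∧
      -truncatedLogMGF volume (fun x => x ^ (-(1 + α))) μ ε u ≤ -μ * u := by
  have hweight : ∀ x ∈ Ioc 0 ε, x * x ^ (-(1 + α)) = x ^ (-α) := fun x hx => by
    rw [mul_comm, ← rpow_add_one hx.1.ne']
    congr 1; ring
  have hupper := truncatedLogMGF_le (μ := μ) (rpow_nonneg_of_mem_Ioc_zero _) hweight
    (integrableOn_Ioc_rpow_neg hα hε.le) hu₀
  rw [tiltedMass_zero, hu, setIntegral_Ioc_zero_rpow_neg hα hε.le] at hupper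
  have hlower : u * μ ≤ truncatedLogMGF volume (fun x => x ^ (-(1 + α))) μ ε u :=
    mul_le_truncatedLogMGF (rpow_nonneg_of_mem_Ioc_zero _) hu₀
  have := mul_le_mul_of_nonneg_left hmass hu₀
  constructor <;> linarith

lemma eventually_neg_truncatedLogMGF_bounds (hα : α < 1) {μ c C : ℝ} (hμ : μ < 0)
    (hc : c < 1 - α) (hC : 1 - α < C) :
    ∀ᶠ ε in 𝓝[>] (0 : ℝ), ∀ u, tiltedMass volume (fun x => x ^ (-α)) ε u = -μ →
      -μ / 4 * c * ε⁻¹ * |log ε| ≤ -truncatedLogMGF volume (fun x => x ^ (-(1 + α))) μ ε u ∧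
      -truncatedLogMGF volume (fun x => x ^ (-(1 + α))) μ ε u ≤ -μ * C * ε⁻¹ * |log ε| := by
  have hm : 0 < -μ := neg_pos.2 hμ
  filter_upwards [self_mem_nhdsWithin, eventually_rpow_div_lt (sub_pos.2 hα) (half_pos hm),
    eventually_esscher_parameter_bounds hα hm hc hC] with ε (hε : 0 < ε) hmass hbounds u hu
  obtain ⟨hpos, hlower, hupper⟩ := hbounds u hu
  obtain ⟨hΛ_lower, hΛ_upper⟩ :=
    neg_truncatedLogMGF_rpow_neg_bounds hα hε hmass.le hpos.le hu
  constructor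
  · calc -μ / 4 * c * ε⁻¹ * |log ε| = -μ / 4 * (ε⁻¹ * (c * |log ε|)) := by ring
      _ ≤ -μ / 4 * (ε⁻¹ * (ε * u)) := by gcongr
      _ = -μ / 4 * u := by rw [inv_mul_cancel_left₀ hε.ne']
      _ ≤ _ := hΛ_lower
  · calc _ ≤ -μ * u := hΛ_upper
      _ = -μ * (ε⁻¹ * (ε * u)) := by rw [inv_mul_cancel_left₀ hε.ne']
      _ ≤ -μ * (ε⁻¹ * (C * |log ε|)) := by gcongr
      _ = -μ * C * ε⁻¹ * |log ε| := by ring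

end Stable

theorem stmt_19_general {μ α : ℝ} (hμ : μ < 0) (hα : α < 1) :
    (∀ ε : ℝ, 0 < ε → ε ^ (1 - α) / (1 - α) < -μ →
      (∃! u, μ + tiltedMass volume (fun x => x ^ (-α)) ε u = 0) ∧
        ∀ u, μ + tiltedMass volume (fun x => x ^ (-α)) ε u = 0 → 0 < u) ∧
    ∃ c C ε₀ : ℝ, 0 < c ∧ c ≤ C ∧ 0 < ε₀ ∧ ε₀ < 1 ∧
      ∀ ε u : ℝ, 0 < ε → ε ≤ ε₀ → μ + tiltedMass volume (fun x => x ^ (-α)) ε u = 0 →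
        (c * |log ε| ≤ ε * u ∧ ε * u ≤ C * |log ε|) ∧
        (c * ε⁻¹ * |log ε| ≤ -truncatedLogMGF volume (fun x => x ^ (-(1 + α))) μ ε u ∧
          -truncatedLogMGF volume (fun x => x ^ (-(1 + α))) μ ε u ≤ C * ε⁻¹ * |log ε|) := by
  have hm : 0 < -μ := neg_pos.2 hμ
  have hα' : 0 < 1 - α := sub_pos.2 hα
  have hc : (1 - α) / 2 < 1 - α := half_lt_self hα'
  have hC : 1 - α < 2 * (1 - α) := by linarith
  simp only [add_eq_zero_iff_eq_neg']
  refine ⟨fun ε hε hmass => ⟨?_, fun u => pos_of_tiltedMass_rpow_neg_eq hα hε hmass⟩, ?_⟩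
  · exact existsUnique_tiltedMass_eq (rpow_nonneg_of_mem_Ioc_zero _)
      (setIntegral_Ioc_zero_rpow_neg_pos hα hε)
      ((setIntegral_Ioc_zero_rpow_neg hα hε.le).trans_le hmass.le)
  obtain ⟨ε₀, hε₀, hbounds⟩ := mem_nhdsGT_iff_exists_Ioc_subset.1 <|
    (eventually_esscher_parameter_bounds hα hm hc hC).and <|
    (eventually_neg_truncatedLogMGF_bounds hα hμ hc hC).and (Ioo_mem_nhdsGT one_pos)
  refine ⟨min ((1 - α) / 2) (-μ / 4 * ((1 - α) / 2)), max (2 * (1 - α)) (-μ * (2 * (1 - α))), ε₀,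
    by positivity, (min_le_left _ _).trans ((hc.trans hC).le.trans (le_max_left _ _)), hε₀,
    (hbounds ⟨hε₀, le_rfl⟩).2.2.2, fun ε u hε hle hu => ?_⟩
  obtain ⟨hparam, hΛ, -⟩ := hbounds ⟨hε, hle⟩
  obtain ⟨-, hlower, hupper⟩ := hparam u hu
  obtain ⟨hΛ_lower, hΛ_upper⟩ := hΛ u hu
  refine ⟨⟨hlower.trans' ?_, hupper.trans ?_⟩, hΛ_lower.trans' ?_, hΛ_upper.trans ?_⟩ <;> gcongr
  exacts [min_le_left _ _, le_max_left _ _, min_le_right _ _, le_max_right _ _]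

/-- The analytic core of Example 2.3 of the paper (α-stable subordinator with negative
drift `μ`): for small `ε` the Esscher equation `μ + ∫₀^ε e^{u x} x^{−α} dx = 0` has a unique
solution `u_ε`, which is positive, and it satisfies `ε u_ε ≈ |log ε|` as well as
`−Λ_ε(u_ε) ≈ ε⁻¹ |log ε|`, where `Λ_ε(u) = uμ + ∫₀^ε (e^{ux} − 1) x^{−1−α} dx`. -/
theorem stmt_19 (μ : ℝ) (hμ : μ < 0) (α : ℝ) (hα : α ∈ Ioo (0 : ℝ) 1) :
    ((∀ ε : ℝ, 0 < ε → ε ^ (1 - α) / (1 - α) < -μ →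
        (∃! u : ℝ, μ + ∫ x in Ioc (0 : ℝ) ε, Real.exp (u * x) * x ^ (-α) = 0) ∧
        (∀ u : ℝ, μ + ∫ x in Ioc (0 : ℝ) ε, Real.exp (u * x) * x ^ (-α) = 0 → 0 < u))) ∧
    ∃ c C ε₀ : ℝ, 0 < c ∧ c ≤ C ∧ 0 < ε₀ ∧ ε₀ < 1 ∧
      ∀ ε u : ℝ, 0 < ε → ε ≤ ε₀ →
        μ + ∫ x in Ioc (0 : ℝ) ε, Real.exp (u * x) * x ^ (-α) = 0 →
          (c * |Real.log ε| ≤ ε * u ∧ ε * u ≤ C * |Real.log ε|) ∧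
          (c * ε⁻¹ * |Real.log ε|
              ≤ -(u * μ + ∫ x in Ioc (0 : ℝ) ε, (Real.exp (u * x) - 1) * x ^ (-(1 + α))) ∧
            -(u * μ + ∫ x in Ioc (0 : ℝ) ε, (Real.exp (u * x) - 1) * x ^ (-(1 + α)))
              ≤ C * ε⁻¹ * |Real.log ε|) :=
  stmt_19_general hμ hα.2
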